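/- On the collection of difunctional relations on a type α (difunctional subsets of α × α), the relation R ∼ S, defined to hold when there exists a difunctional relation T ⊆ α × α with R⁻¹ ∘ R = T ∘ T⁻¹ and T⁻¹ ∘ T = S ∘ S⁻¹ (i.e. the triple composition R ∘ T ∘ S is defined), is an equivalence relation. (Paper's Lemma (∼.A), in the base case of point types.) -/

import Mathlib

/-!
Difunctional relations form a groupoid: `R` is an arrow from `Left(R) = R ∘ R⁻¹` to
`Right(R) = R⁻¹ ∘ R`, with inverse `R⁻¹`. Thus `R ∼ S` says that some arrow `T` leads from the
target of `R` to the source of `S`. For reflexivity take `R⁻¹`; for symmetry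
`S⁻¹ ∘ T⁻¹ ∘ R⁻¹`, which leads from the target of `S` to the source of `R`; for transitivity,
given `T` from `R` to `S` and `U` from `S` to `V`, take `T ∘ S ∘ U`.
-/

/-- The converse of a relation `R ⊆ α × β`. -/
def rconv {α β : Type*} (R : Set (α × β)) : Set (β × α) := {p | (p.2, p.1) ∈ R}

/-- Composition of relations `R ⊆ α × β` and `S ⊆ β × γ`. -/
def rcomp {α β γ : Type*} (R : Set (α × β)) (S : Set (β × γ)) : Set (α × γ) :=
  {p | ∃ j, (p.1, j) ∈ R ∧ (j, p.2) ∈ S}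

/-- A relation is difunctional when `R ∘ R⁻¹ ∘ R ⊆ R`, i.e.
`(i,j) ∈ R`, `(k,j) ∈ R`, `(k,l) ∈ R` imply `(i,l) ∈ R`. -/
def Difunctional {α β : Type*} (R : Set (α × β)) : Prop :=
  ∀ ⦃i j k l⦄, (i, j) ∈ R → (k, j) ∈ R → (k, l) ∈ R → (i, l) ∈ R

/-- The paper's relation `R ∼ S`: there is a difunctional `T` with
`Right(R) = Left(T)` and `Right(T) = Left(S)`, i.e. `R ∘ T ∘ S` is defined. -/
def simRel {α : Type*} (R S : Set (α × α)) : Prop :=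
  ∃ T : Set (α × α), Difunctional T ∧
    rcomp (rconv R) R = rcomp T (rconv T) ∧ rcomp (rconv T) T = rcomp S (rconv S)

/-- The paper's `Left(R) = R ∘ R⁻¹`, the source object of `R` in the groupoid of difunctional
relations. -/
def rleft {α β : Type*} (R : Set (α × β)) : Set (α × α) := rcomp R (rconv R)

/-- The paper's `Right(R) = R⁻¹ ∘ R`, the target object of `R` in the groupoid of difunctional
relations. -/
def rright {α β : Type*} (R : Set (α × β)) : Set (β × β) := rcomp (rconv R) R

/-- The paper's condition that `R ∘ S` is defined. The set `rcomp R S` exists regardless, but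
need not be difunctional without this condition. -/
def Composable {α β γ : Type*} (R : Set (α × β)) (S : Set (β × γ)) : Prop := rright R = rleft S

section

variable {α β γ δ : Type*} {R : Set (α × β)} {S : Set (β × γ)} {T : Set (γ × δ)}

theorem rconv_rcomp (R : Set (α × β)) (S : Set (β × γ)) :
    rconv (rcomp R S) = rcomp (rconv S) (rconv R) :=
  SetRel.inv_comp R S

theorem rcomp_assoc (R : Set (α × β)) (S : Set (β × γ)) (T : Set (γ × δ)) :
    rcomp (rcomp R S) T = rcomp R (rcomp S T) :=
  SetRel.comp_assoc R S T

theorem rleft_rconv (R : Set (α × β)) : rleft (rconv R) = rright R := rfl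

theorem composable_self_rconv (R : Set (α × β)) : Composable R (rconv R) := rfl

theorem composable_rconv_self (R : Set (α × β)) : Composable (rconv R) R := rfl

protected theorem Difunctional.rconv (hR : Difunctional R) : Difunctional (rconv R) :=
  fun _ _ _ _ hij hkj hkl => hR hkl hkj hij

theorem difunctional_iff_rcomp_rright : Difunctional R ↔ rcomp R (rright R) = R := by
  constructor
  · intro hR
    ext ⟨i, l⟩
    exact ⟨fun ⟨_, hij, _, hkj, hkl⟩ => hR hij hkj hkl, fun hil => ⟨l, hil, i, hil, hil⟩⟩
  · intro h i j k l hij hkj hkl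
    rw [← h]
    exact ⟨j, hij, k, hkj, hkl⟩

namespace Composable

protected theorem rconv (h : Composable R S) : Composable (rconv S) (rconv R) :=
  Eq.symm h

theorem rleft_rcomp (hR : Difunctional R) (h : Composable R S) :
    rleft (rcomp R S) = rleft R :=
  calc rleft (rcomp R S)
      = rcomp (rcomp R (rleft S)) (rconv R) := by
        simp only [rleft, rconv_rcomp, rcomp_assoc]
    _ = rcomp (rcomp R (rright R)) (rconv R) := by rw [← show rright R = rleft S from h]
    _ = rleft R := by rw [difunctional_iff_rcomp_rright.1 hR, rleft]

theorem rright_rcomp (hS : Difunctional S) (h : Composable R S) :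
    rright (rcomp R S) = rright S :=
  calc rright (rcomp R S)
      = rleft (rcomp (rconv S) (rconv R)) := by rw [← rconv_rcomp, rleft_rconv]
    _ = rleft (rconv S) := h.rconv.rleft_rcomp hS.rconv
    _ = rright S := rleft_rconv S

theorem difunctional_rcomp (hS : Difunctional S) (h : Composable R S) :
    Difunctional (rcomp R S) := by
  rw [difunctional_iff_rcomp_rright, h.rright_rcomp hS, rcomp_assoc,
    difunctional_iff_rcomp_rright.1 hS]

theorem rcomp_left (hS : Difunctional S) (hRS : Composable R S) (hST : Composable S T) :
    Composable (rcomp R S) T :=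
  (hRS.rright_rcomp hS).trans hST

theorem rcomp_right (hS : Difunctional S) (hRS : Composable R S) (hST : Composable S T) :
    Composable R (rcomp S T) :=
  hRS.trans (hST.rleft_rcomp hS).symm

end Composable

theorem simRel_of_composable_chain {P Q : Set (α × α)} {R : Set (α × β)} {S : Set (β × γ)}
    {T : Set (γ × α)} (hR : Difunctional R) (hS : Difunctional S) (hT : Difunctional T)
    (hPR : Composable P R) (hRS : Composable R S) (hST : Composable S T)
    (hTQ : Composable T Q) : simRel P Q := by
  have hRS_difun : Difunctional (rcomp R S) := hRS.difunctional_rcomp hS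
  have hP_RS : Composable P (rcomp R S) := hPR.rcomp_right hR hRS
  have hRS_T : Composable (rcomp R S) T := hRS.rcomp_left hS hST
  exact ⟨rcomp (rcomp R S) T, hRS_T.difunctional_rcomp hT, hP_RS.rcomp_right hRS_difun hRS_T,
    hRS_T.rcomp_left hT hTQ⟩

theorem simRel_refl {R : Set (α × α)} (hR : Difunctional R) : simRel R R :=
  ⟨rconv R, hR.rconv, composable_self_rconv R, composable_rconv_self R⟩

theorem simRel_symm {R S : Set (α × α)} (hR : Difunctional R) (hS : Difunctional S) :
    simRel R S → simRel S R := by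
  rintro ⟨T, hT, hRT, hTS⟩
  exact simRel_of_composable_chain hS.rconv hT.rconv hR.rconv
    (composable_self_rconv S) (Composable.rconv hTS) (Composable.rconv hRT)
    (composable_rconv_self R)

theorem simRel_trans {R S V : Set (α × α)} (hS : Difunctional S) :
    simRel R S → simRel S V → simRel R V := by
  rintro ⟨T, hT, hRT, hTS⟩ ⟨U, hU, hSU, hUV⟩
  exact simRel_of_composable_chain hT hS hU hRT hTS hSU hUV

end

/-- (∼.A), base case of point types: `∼` is an equivalence relation on the
difunctional relations on `α`. -/
theorem stmt11 {α : Type*} :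
    Equivalence (fun R S : {R : Set (α × α) // Difunctional R} => simRel R.1 S.1) :=
  ⟨fun R => simRel_refl R.2, fun {R S} => simRel_symm R.2 S.2,
    fun {_ S _} => simRel_trans S.2⟩
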